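/- If D ⊆ ℝℙⁿ is an open convex set, then its elliptic tube D^e ⊆ ℂℙⁿ is ℂ-convex. -/

import Mathlib

open scoped ComplexConjugate

noncomputable section

abbrev RV (n : ℕ) : Type := Fin (n + 1) → ℝ
abbrev CV (n : ℕ) : Type := Fin (n + 1) → ℂ
abbrev RP (n : ℕ) : Type := Projectivization ℝ (RV n)
abbrev CP (n : ℕ) : Type := Projectivization ℂ (CV n)

/-- The quotient topology on a projectivization. -/
instance projTopology {K V : Type*} [DivisionRing K] [AddCommGroup V] [Module K V]
    [TopologicalSpace V] : TopologicalSpace (Projectivization K V) :=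
  inferInstanceAs (TopologicalSpace (Quotient (projectivizationSetoid K V)))

/-- Complexification of a real vector. -/
def cplx {n : ℕ} (v : RV n) : CV n := fun i => (v i : ℂ)

/-- The closed (possibly degenerate) projective segment spanned by two lifts. -/
def realSeg {n : ℕ} (v₀ v₁ : RV n) : Set (RP n) :=
  {x | ∃ c₀ c₁ : ℝ, 0 ≤ c₀ * c₁ ∧ ∃ h : c₀ • v₀ + c₁ • v₁ ≠ 0,
    x = Projectivization.mk ℝ (c₀ • v₀ + c₁ • v₁) h}

/-- The elliptic tube over the closed segment determined by the lifts `v₀ v₁`. -/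
def segTube {n : ℕ} (v₀ v₁ : RV n) : Set (CP n) :=
  {z | ∃ c₀ c₁ : ℂ, 0 ≤ (c₀ * conj c₁).re ∧ ∃ h : c₀ • cplx v₀ + c₁ • cplx v₁ ≠ 0,
    z = Projectivization.mk ℂ (c₀ • cplx v₀ + c₁ • cplx v₁) h}

/-- The elliptic tube over a subset `D` of real projective space: the union of the tubes
over all closed segments contained in `D`. -/
def eTube {n : ℕ} (D : Set (RP n)) : Set (CP n) :=
  ⋃ (v₀ : RV n) (v₁ : RV n) (_ : v₀ ≠ 0) (_ : v₁ ≠ 0) (_ : realSeg v₀ v₁ ⊆ D),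
    segTube v₀ v₁

/-- Real projective lines. -/
def isLineR {n : ℕ} (L : Set (RP n)) : Prop :=
  ∃ W : Submodule ℝ (RV n), Module.finrank ℝ W = 2 ∧ L = {x | x.rep ∈ W}

/-- Convexity in real projective space: the set contains no projective line and its
intersection with every projective line is connected. -/
def convexR {n : ℕ} (D : Set (RP n)) : Prop :=
  (∀ L, isLineR L → ¬ L ⊆ D) ∧ ∀ L, isLineR L → IsPreconnected (D ∩ L)

/-- Complex projective lines in `ℂℙⁿ`. -/
def isLineC {n : ℕ} (L : Set (CP n)) : Prop :=
  ∃ W : Submodule ℂ (CV n), Module.finrank ℂ W = 2 ∧ L = {z | z.rep ∈ W}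

/-- ℂ-convexity: the set contains no complex projective line, and its intersection with
every complex projective line is connected and simply connected. -/
def cConvex {n : ℕ} (E : Set (CP n)) : Prop :=
  (∀ L, isLineC L → ¬ L ⊆ E) ∧
    ∀ L, isLineC L → IsPreconnected (E ∩ L) ∧
      ((E ∩ L).Nonempty → SimplyConnectedSpace ↥(E ∩ L))

/-!
The vectors representing the points of an open convex set `D` split into an open convex cone `C` and
its opposite: `C` consists of the vectors that can be joined to a fixed one over `D`, and convexity
of `D` says that this holds for exactly one of `v` and `-v`. Rotating a vector `c₀ v₀ + c₁ v₁` whose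
coefficients form an angle of at most `π / 2` into the first quadrant shows that the elliptic tube
of `D` is the image of the open convex set `T = C + iC`. A complex functional without zeros on `T`,
given by the Hahn–Banach theorem, excludes complex lines from that image. A partition of unity
provides a continuous lift of the image to `T`, which makes each linear section of the image a
retract of a convex set, hence contractible.
-/

open Set Topology TopologicalSpace
open scoped LinearAlgebra.Projectivization

section Projectivization

variable {K V : Type*} [DivisionRing K] [AddCommGroup V] [Module K V]

theorem rep_mk_mem_iff (W : Submodule K V) {v : V} (hv : v ≠ 0) :
    (Projectivization.mk K v hv).rep ∈ W ↔ v ∈ W := by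
  obtain ⟨a, ha⟩ := Projectivization.exists_smul_eq_mk_rep K v hv
  rw [← ha]
  exact W.smul_mem_iff' a

/-- The cone over a set `D` of points of a projective space: all vectors, necessarily nonzero, that
represent a point of `D`. -/
def liftSet (D : Set (ℙ K V)) : Set V :=
  {v | ∃ h : v ≠ 0, Projectivization.mk K v h ∈ D}

theorem zero_notMem_liftSet {D : Set (ℙ K V)} : (0 : V) ∉ liftSet D := fun h => h.1 rfl

theorem rep_mem_liftSet_iff {D : Set (ℙ K V)} {x : ℙ K V} : x.rep ∈ liftSet D ↔ x ∈ D := by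
  simp [liftSet, x.rep_nonzero]

theorem smul_mem_liftSet_iff {D : Set (ℙ K V)} {v : V} {a : K} (ha : a ≠ 0) :
    a • v ∈ liftSet D ↔ v ∈ liftSet D := by
  have hmk (h : a • v ≠ 0) (h' : v ≠ 0) :
      Projectivization.mk K (a • v) h = Projectivization.mk K v h' :=
    (Projectivization.mk_eq_mk_iff' K _ _ h h').2 ⟨a, rfl⟩
  exact ⟨fun ⟨h, hD⟩ => ⟨right_ne_zero_of_smul h, hmk h _ ▸ hD⟩,
    fun ⟨h, hD⟩ => ⟨smul_ne_zero ha h, (hmk _ h).symm ▸ hD⟩⟩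

theorem neg_mem_liftSet_iff {D : Set (ℙ K V)} {v : V} : -v ∈ liftSet D ↔ v ∈ liftSet D := by
  simpa using smul_mem_liftSet_iff (D := D) (v := v) (neg_ne_zero.2 (one_ne_zero (α := K)))

theorem mem_liftSet_inter_iff {D : Set (ℙ K V)} {W : Submodule K V} {v : V} :
    v ∈ liftSet (D ∩ {x | x.rep ∈ W}) ↔ v ∈ liftSet D ∧ v ∈ W :=
  ⟨fun ⟨hv, hD, hW⟩ => ⟨⟨hv, hD⟩, (rep_mk_mem_iff W hv).1 hW⟩,
    fun ⟨⟨hv, hD⟩, hW⟩ => ⟨hv, hD, (rep_mk_mem_iff W hv).2 hW⟩⟩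

variable (K) in
/-- The image in projective space of a set `T` of vectors; the zero vector is ignored. -/
def projImage (T : Set V) : Set (ℙ K V) :=
  Projectivization.mk' K '' (Subtype.val ⁻¹' T)

theorem mk_mem_projImage_iff {T : Set V} {v : V} (hv : v ≠ 0) :
    Projectivization.mk K v hv ∈ projImage K T ↔ ∃ a : Kˣ, a • v ∈ T := by
  constructor
  · rintro ⟨w, hw, hwv⟩
    obtain ⟨a, ha⟩ := (Projectivization.mk_eq_mk_iff K (w : V) v w.2 hv).1 hwv
    exact ⟨a, ha ▸ hw⟩
  · rintro ⟨a, ha⟩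
    exact ⟨⟨a • v, (smul_ne_zero_iff_ne a).2 hv⟩, ha,
      (Projectivization.mk_eq_mk_iff K _ _ _ _).2 ⟨a, rfl⟩⟩

theorem mem_projImage_iff {T : Set V} {p : ℙ K V} :
    p ∈ projImage K T ↔ ∃ a : Kˣ, a • p.rep ∈ T := by
  rw [← mk_mem_projImage_iff p.rep_nonzero, p.mk_rep]

variable [TopologicalSpace V]

theorem continuous_projectivization_mk' :
    Continuous (Projectivization.mk' K : {v : V // v ≠ 0} → ℙ K V) :=
  continuous_quotient_mk'

theorem isOpen_liftSet [T1Space V] {D : Set (ℙ K V)} (hD : IsOpen D) : IsOpen (liftSet D) := by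
  have h := isOpen_ne.isOpenMap_subtype_val _ (hD.preimage continuous_projectivization_mk')
  convert h using 1
  ext v
  simp [liftSet, Projectivization.mk'_eq_mk]

variable [ContinuousConstSMul K V]

theorem isOpen_projImage {T : Set V} (hT : IsOpen T) : IsOpen (projImage K T) := by
  have h : Projectivization.mk' K ⁻¹' projImage K T =
      ⋃ a : Kˣ, (fun v : {v : V // v ≠ 0} => a • (v : V)) ⁻¹' T := by
    ext v
    simp [Projectivization.mk'_eq_mk, mk_mem_projImage_iff]
  refine isQuotientMap_quotient_mk'.isOpen_preimage.1 ?_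
  change IsOpen (Projectivization.mk' K ⁻¹' projImage K T)
  rw [h]
  exact isOpen_iUnion fun a => hT.preimage (continuous_subtype_val.const_smul (a : K))

theorem isOpenQuotientMap_projectivization_mk' :
    IsOpenQuotientMap (Projectivization.mk' K : {v : V // v ≠ 0} → ℙ K V) := by
  refine ⟨Quotient.mk_surjective, continuous_projectivization_mk', fun U hU => ?_⟩
  obtain ⟨T, hT, rfl⟩ := isOpen_induced_iff.1 hU
  exact isOpen_projImage hT

end Projectivization

section AffineLift

variable {K V : Type*} [Field K] [AddCommGroup V] [Module K V]

/-- The representative of `p` in the affine hyperplane `ℓ = 1`; the junk value is `0` when `p` lies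
in the projective hyperplane `ℓ = 0`. -/
def affineLift (ℓ : V →ₗ[K] K) (p : ℙ K V) : V :=
  (ℓ p.rep)⁻¹ • p.rep

theorem affineLift_mk (ℓ : V →ₗ[K] K) {v : V} (hv : v ≠ 0) :
    affineLift ℓ (Projectivization.mk K v hv) = (ℓ v)⁻¹ • v := by
  obtain ⟨a, ha⟩ := Projectivization.exists_smul_eq_mk_rep K v hv
  rw [affineLift, ← ha, Units.smul_def, map_smul, smul_smul, smul_eq_mul, mul_inv_rev, mul_assoc,
    inv_mul_cancel₀ a.ne_zero, mul_one]

theorem continuousAt_affineLift [TopologicalSpace K] [ContinuousInv₀ K] [TopologicalSpace V]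
    [ContinuousSMul K V] (ℓ : V →L[K] K) {p : ℙ K V} (hp : ℓ p.rep ≠ 0) :
    ContinuousAt (affineLift (ℓ : V →ₗ[K] K)) p := by
  have hmk : p = Projectivization.mk' K ⟨p.rep, p.rep_nonzero⟩ := p.mk_rep.symm
  have hcomp : affineLift (ℓ : V →ₗ[K] K) ∘ Projectivization.mk' K =
      fun v : {v : V // v ≠ 0} => (ℓ v)⁻¹ • (v : V) := funext fun v => affineLift_mk _ v.2
  rw [hmk, ← isOpenQuotientMap_projectivization_mk'.continuousAt_comp_iff, hcomp]
  exact ((ℓ.continuous.comp continuous_subtype_val).continuousAt.inv₀ hp).smul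
    continuous_subtype_val.continuousAt

end AffineLift

theorem contractibleSpace_of_comp_eq_id {X Y : Type*} [TopologicalSpace X] [TopologicalSpace Y]
    [ContractibleSpace Y] (s : C(X, Y)) (r : C(Y, X)) (h : r.comp s = ContinuousMap.id X) :
    ContractibleSpace X := by
  rw [contractible_iff_id_nullhomotopic, ← h]
  simpa using ((id_nullhomotopic Y).comp_right r).comp_left s

section OpenConvex

variable {𝕜 V : Type*} [RCLike 𝕜] [AddCommGroup V] [Module 𝕜 V] [Module ℝ V]
  [IsScalarTower ℝ 𝕜 V] [TopologicalSpace V] [ContinuousSMul 𝕜 V]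

theorem exists_strongDual_ne_zero_of_isOpen_convex [IsTopologicalAddGroup V] {T : Set V}
    (hTo : IsOpen T) (hTc : Convex ℝ T) (hT0 : (0 : V) ∉ T) :
    ∃ ℓ : V →L[𝕜] 𝕜, ∀ v ∈ T, ℓ v ≠ 0 := by
  obtain ⟨ℓ, hℓ⟩ := RCLike.geometric_hahn_banach_open_point (𝕜 := 𝕜) hTc hTo hT0
  exact ⟨ℓ, fun v hv h => by simpa [h] using hℓ v hv⟩

theorem exists_continuous_smul_mem [PseudoMetrizableSpace V] {T : Set V} (hTo : IsOpen T)
    (hTc : Convex ℝ T) :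
    ∃ g : C({v : V // ∃ a : 𝕜, a • v ∈ T}, 𝕜), ∀ v, g v • (v : V) ∈ T := by
  let := TopologicalSpace.pseudoMetrizableSpacePseudoMetric V
  refine exists_continuous_forall_mem_convex_of_local_const
    (t := fun v : {v : V // ∃ a : 𝕜, a • v ∈ T} => {a : 𝕜 | a • (v : V) ∈ T})
    (fun v => hTc.is_linear_preimage
      ⟨fun a b => add_smul a b (v : V), fun r a => smul_assoc r a (v : V)⟩) ?_
  rintro ⟨v, a, ha⟩
  have hcont : Continuous fun w : {v : V // ∃ a : 𝕜, a • v ∈ T} => a • (w : V) :=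
    continuous_subtype_val.const_smul a
  exact ⟨a, hcont.continuousAt.eventually_mem (hTo.mem_nhds ha)⟩

variable [IsTopologicalAddGroup V]

/-- The admissible lifts of a point are a convex set of multiples of an affine representative, so a
partition of unity on the affine chart glues local choices. -/
theorem exists_continuous_lift_projImage [PseudoMetrizableSpace V] {T : Set V} (hTo : IsOpen T)
    (hTc : Convex ℝ T) (hT0 : (0 : V) ∉ T) :
    ∃ s : C(projImage 𝕜 T, V), ∀ p, s p ∈ T ∧ ∃ c : 𝕜, s p = c • p.1.rep := by
  obtain ⟨ℓ, hℓ⟩ := exists_strongDual_ne_zero_of_isOpen_convex (𝕜 := 𝕜) hTo hTc hT0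
  obtain ⟨g, hg⟩ := exists_continuous_smul_mem (𝕜 := 𝕜) hTo hTc
  have hℓ_rep : ∀ p ∈ projImage 𝕜 T, ℓ p.rep ≠ 0 := fun p hp h => by
    obtain ⟨a, ha⟩ := mem_projImage_iff.1 hp
    exact hℓ _ ha (by rw [Units.smul_def, map_smul, h, smul_zero])
  let σ : C(projImage 𝕜 T, V) := ⟨fun p => affineLift (ℓ : V →ₗ[𝕜] 𝕜) p,
    continuous_iff_continuousAt.2 fun p =>
      (continuousAt_affineLift ℓ (hℓ_rep p p.2)).comp continuous_subtype_val.continuousAt⟩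
  have hσ : ∀ p, ∃ a : 𝕜, a • σ p ∈ T := fun p => by
    obtain ⟨a, ha⟩ := mem_projImage_iff.1 p.2
    refine ⟨a * ℓ p.1.rep, ?_⟩
    change (a * ℓ p.1.rep) • (ℓ p.1.rep)⁻¹ • p.1.rep ∈ T
    rwa [smul_smul, mul_assoc, mul_inv_cancel₀ (hℓ_rep p p.2), mul_one]
  exact ⟨⟨fun p => g ⟨σ p, hσ p⟩ • σ p, by fun_prop⟩, fun p => ⟨hg ⟨σ p, hσ p⟩,
    g ⟨σ p, hσ p⟩ * (ℓ p.1.rep)⁻¹, smul_smul _ _ _⟩⟩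

theorem contractibleSpace_projImage_inter [PseudoMetrizableSpace V] {T : Set V} (hTo : IsOpen T)
    (hTc : Convex ℝ T) (hT0 : (0 : V) ∉ T) (W : Submodule 𝕜 V)
    (hne : (projImage 𝕜 T ∩ {z | z.rep ∈ W}).Nonempty) :
    ContractibleSpace ↥(projImage 𝕜 T ∩ {z | z.rep ∈ W}) := by
  obtain ⟨s, hs⟩ := exists_continuous_lift_projImage (𝕜 := 𝕜) hTo hTc hT0
  have hK0 : ∀ k ∈ T ∩ W, k ≠ 0 := fun k hk h => hT0 (h ▸ hk.1)
  have hsW : ∀ p : ↥(projImage 𝕜 T ∩ {z | z.rep ∈ W}), s ⟨p, p.2.1⟩ ∈ T ∩ W := fun p => by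
    obtain ⟨hsT, c, hc⟩ := hs ⟨p, p.2.1⟩
    exact ⟨hsT, hc ▸ W.smul_mem c p.2.2⟩
  let lift : C(↥(projImage 𝕜 T ∩ {z | z.rep ∈ W}), ↥(T ∩ W)) :=
    ⟨fun p => ⟨s ⟨p, p.2.1⟩, hsW p⟩, by fun_prop⟩
  let proj : C(↥(T ∩ W), ↥(projImage 𝕜 T ∩ {z | z.rep ∈ W})) :=
    ⟨fun k => ⟨Projectivization.mk' 𝕜 ⟨k, hK0 k k.2⟩,
      mem_image_of_mem _ k.2.1, (rep_mk_mem_iff W (hK0 k k.2)).2 k.2.2⟩,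
      (continuous_projectivization_mk'.comp (by fun_prop)).subtype_mk _⟩
  have := IsScalarTower.continuousSMul (M := ℝ) (α := V) 𝕜
  have : ContractibleSpace ↥(T ∩ W) :=
    (hTc.inter (W.restrictScalars ℝ).convex).contractibleSpace ⟨_, hsW ⟨_, hne.some_mem⟩⟩
  refine contractibleSpace_of_comp_eq_id lift proj (ContinuousMap.ext fun p => Subtype.ext ?_)
  obtain ⟨-, c, hc⟩ := hs ⟨p, p.2.1⟩
  conv_rhs => rw [ContinuousMap.id_apply, ← p.1.mk_rep]
  exact (Projectivization.mk_eq_mk_iff' 𝕜 _ _ _ _).2 ⟨c, hc.symm⟩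

theorem not_subset_projImage_of_one_lt_finrank {T : Set V} (hTo : IsOpen T) (hTc : Convex ℝ T)
    (hT0 : (0 : V) ∉ T) {W : Submodule 𝕜 V} (hW : 1 < Module.finrank 𝕜 W) :
    ¬ {z : ℙ 𝕜 V | z.rep ∈ W} ⊆ projImage 𝕜 T := by
  intro hsub
  obtain ⟨ℓ, hℓ⟩ := exists_strongDual_ne_zero_of_isOpen_convex (𝕜 := 𝕜) hTo hTc hT0
  have : FiniteDimensional 𝕜 W := Module.finite_of_finrank_pos (by lia)
  have hker : ((ℓ : V →ₗ[𝕜] 𝕜).domRestrict W).ker ≠ ⊥ :=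
    LinearMap.ker_ne_bot_of_finrank_lt (by rwa [Module.finrank_self])
  obtain ⟨w, hw, hw0⟩ := Submodule.exists_mem_ne_zero_of_ne_bot hker
  have hwV : (w : V) ≠ 0 := by simpa using hw0
  obtain ⟨a, ha⟩ := (mk_mem_projImage_iff hwV).1 (hsub ((rep_mk_mem_iff W hwV).2 w.2))
  have hℓw : ℓ w = 0 := hw
  exact hℓ _ ha (by rw [Units.smul_def, map_smul, hℓw, smul_zero])

end OpenConvex

theorem cConvex_projImage {n : ℕ} {T : Set (CV n)} (hTo : IsOpen T) (hTc : Convex ℝ T)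
    (hT0 : (0 : CV n) ∉ T) : cConvex (projImage ℂ T) := by
  constructor
  · rintro _ ⟨W, hW, rfl⟩
    exact not_subset_projImage_of_one_lt_finrank hTo hTc hT0 (by lia)
  · rintro _ ⟨W, -, rfl⟩
    rcases (projImage ℂ T ∩ {z | z.rep ∈ W}).eq_empty_or_nonempty with hempty | hne
    · rw [hempty]
      exact ⟨isPreconnected_empty, fun h => absurd h not_nonempty_empty⟩
    · have := contractibleSpace_projImage_inter hTo hTc hT0 W hne
      exact ⟨isPreconnected_iff_preconnectedSpace.2 inferInstance, fun _ => inferInstance⟩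

section Segment

variable {V : Type*} [AddCommGroup V] [Module ℝ V] {D : Set (ℙ ℝ V)} {u v : V}

theorem smul_add_smul_mem_liftSet (h : segment ℝ u v ⊆ liftSet D) {a b : ℝ} (hab : 0 ≤ a * b)
    (hne : a ≠ 0 ∨ b ≠ 0) : a • u + b • v ∈ liftSet D := by
  have hsum : a + b ≠ 0 := fun h0 => by
    obtain rfl := eq_neg_of_add_eq_zero_left h0
    have hb : b = 0 := by nlinarith
    simp [hb] at hne
  have ha' : 0 ≤ a / (a + b) := by
    rw [show a / (a + b) = (a * a + a * b) / (a + b) ^ 2 by field_simp]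
    exact div_nonneg (add_nonneg (mul_self_nonneg a) hab) (sq_nonneg _)
  have hb' : 0 ≤ b / (a + b) := by
    rw [show b / (a + b) = (a * b + b * b) / (a + b) ^ 2 by field_simp]
    exact div_nonneg (add_nonneg hab (mul_self_nonneg b)) (sq_nonneg _)
  have hmem := h ⟨_, _, ha', hb', by field_simp, rfl⟩
  rwa [← smul_mem_liftSet_iff hsum, smul_add, smul_smul, smul_smul, mul_div_cancel₀ _ hsum,
    mul_div_cancel₀ _ hsum] at hmem

theorem segment_smul_subset_liftSet (hu : u ∈ liftSet D) {a : ℝ} (ha : 0 < a) :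
    segment ℝ u (a • u) ⊆ liftSet D := by
  rintro _ ⟨s, t, hs, ht, hst, rfl⟩
  have hpos : 0 < s + t * a := by
    rcases ht.eq_or_lt with rfl | ht
    · linarith
    · positivity
  rwa [smul_smul, ← add_smul, smul_mem_liftSet_iff hpos.ne']

theorem smul_add_smul_mem_liftSet_of_mem_span_pair {x : V} (hx : x ∈ liftSet D)
    (hxs : x ∈ Submodule.span ℝ {u, v}) {a b : ℝ} (ha : a ≠ 0) {φ : V →ₗ[ℝ] ℝ} (hu : φ u = b)
    (hv : φ v = -a) (hφx : φ x = 0) : a • u + b • v ∈ liftSet D := by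
  obtain ⟨s, t, rfl⟩ := Submodule.mem_span_pair.1 hxs
  have hst : a * t = s * b := by
    rw [map_add, map_smul, map_smul, hu, hv, smul_eq_mul, smul_eq_mul] at hφx
    linarith
  have hsmul : a • (s • u + t • v) = s • (a • u + b • v) := by
    rw [smul_add, smul_add, smul_smul, smul_smul, smul_smul, smul_smul, hst, mul_comm]
  have hmem := (smul_mem_liftSet_iff ha).2 hx
  rw [hsmul] at hmem
  have hs : s ≠ 0 := fun h => zero_notMem_liftSet (by simpa [h] using hmem)
  exact (smul_mem_liftSet_iff hs).1 hmem

end Segment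

theorem exists_dual_apply_eq {K V ι : Type*} [DivisionRing K] [AddCommGroup V] [Module K V]
    {v : ι → V} (hv : LinearIndependent K v) (c : ι → K) :
    ∃ f : V →ₗ[K] K, ∀ i, f (v i) = c i := by
  obtain ⟨g, hg⟩ := LinearMap.exists_leftInverse_of_injective (Finsupp.linearCombination K v)
    (LinearMap.ker_eq_bot.2 hv)
  refine ⟨(Finsupp.linearCombination K c).comp g, fun i => ?_⟩
  simpa using
    congrArg (Finsupp.linearCombination K c) (LinearMap.congr_fun hg (Finsupp.single i 1))

section QuadraticForm

variable {V : Type*} [AddCommGroup V] [Module ℝ V]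

theorem mk_mem_projImage_setOf_pos_iff (Q : QuadraticForm ℝ V) {v : V} (hv : v ≠ 0) :
    Projectivization.mk ℝ v hv ∈ projImage ℝ {w | 0 < Q w} ↔ 0 < Q v := by
  rw [mk_mem_projImage_iff]
  refine ⟨fun ⟨a, ha⟩ => ?_, fun h => ⟨1, by simpa using h⟩⟩
  have ha' : 0 < (a : ℝ) * a * Q v := by simpa [Units.smul_def, QuadraticMap.map_smul] using ha
  exact pos_of_mul_pos_right ha' (mul_self_nonneg _)

theorem mul_pos_of_isPreconnected_of_ne_zero [TopologicalSpace V] [ContinuousConstSMul ℝ V]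
    {S : Set (ℙ ℝ V)} (hS : IsPreconnected S) {Q : QuadraticForm ℝ V} (hQ : Continuous Q)
    (hQ0 : ∀ v ∈ liftSet S, Q v ≠ 0) {v w : V} (hv : v ∈ liftSet S) (hw : w ∈ liftSet S) :
    0 < Q v * Q w := by
  wlog hQv : 0 < Q v generalizing Q
  · have hneg := this (Q := -Q) hQ.neg (by simpa using hQ0)
      (by simpa using (hQ0 v hv).lt_of_le (not_lt.1 hQv))
    simpa using hneg
  have hcover : S ⊆ projImage ℝ {x | 0 < Q x} ∪ projImage ℝ {x | 0 < (-Q) x} := fun p hp => by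
    rw [← p.mk_rep, mem_union, mk_mem_projImage_setOf_pos_iff, mk_mem_projImage_setOf_pos_iff,
      neg_apply, neg_pos]
    exact (hQ0 _ (rep_mem_liftSet_iff.2 hp)).symm.lt_or_gt
  have hdisj : Disjoint (projImage ℝ {x | 0 < Q x}) (projImage ℝ {x | 0 < (-Q) x}) := by
    refine Set.disjoint_left.2 fun p hp hp' => ?_
    rw [← p.mk_rep, mk_mem_projImage_setOf_pos_iff] at hp hp'
    exact (neg_pos.1 hp').not_gt hp
  have hsub := hS.subset_left_of_subset_union
    (isOpen_projImage (isOpen_lt continuous_const hQ))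
    (isOpen_projImage (isOpen_lt continuous_const hQ.neg)) hdisj hcover
    ⟨_, hv.2, (mk_mem_projImage_setOf_pos_iff Q hv.1).2 hQv⟩
  exact mul_pos hQv ((mk_mem_projImage_setOf_pos_iff Q hw.1).1 (hsub hw.2))

end QuadraticForm

section ConvexR

variable {n : ℕ} {D : Set (RP n)} {u v : RV n}

theorem isLineR_span_pair (h : LinearIndependent ℝ ![u, v]) :
    isLineR {x : RP n | x.rep ∈ Submodule.span ℝ {u, v}} := by
  refine ⟨_, ?_, rfl⟩
  rw [← Matrix.range_cons_cons_empty u v ![], finrank_span_eq_card h, Fintype.card_fin]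

theorem not_segment_neg_subset_liftSet (hD : ∀ L, isLineR L → ¬ L ⊆ D)
    (h : segment ℝ u v ⊆ liftSet D) : ¬ segment ℝ u (-v) ⊆ liftSet D := by
  intro h'
  have hmem : ∀ a b : ℝ, a ≠ 0 ∨ b ≠ 0 → a • u + b • v ∈ liftSet D := fun a b hab => by
    rcases le_total 0 (a * b) with hab' | hab'
    · exact smul_add_smul_mem_liftSet h hab' hab
    · simpa using smul_add_smul_mem_liftSet h' (a := a) (b := -b) (by simpa using hab')
        (by simpa using hab)
  have hli : LinearIndependent ℝ ![u, v] := LinearIndependent.pair_iff.2 fun a b hab => by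
    by_contra! hne
    exact zero_notMem_liftSet (hab ▸ hmem a b (not_and_or.1 fun h => hne h.1 h.2))
  refine hD _ (isLineR_span_pair hli) fun x hx => ?_
  obtain ⟨a, b, hab⟩ := Submodule.mem_span_pair.1 hx
  rw [← rep_mem_liftSet_iff, ← hab]
  refine hmem a b ?_
  by_contra! hne
  exact x.rep_nonzero (by simp [← hab, hne])

/-- The quadratic form vanishing at `a • u + b • v` and `c • u + d • v` has no zero on the section
of `D` by the line through `u` and `v`, so it has the same sign at `u` and at `v`. -/
theorem mul_mul_mul_nonneg_of_notMem_liftSet (hD : ∀ L, isLineR L → IsPreconnected (D ∩ L))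
    (hu : u ∈ liftSet D) (hv : v ∈ liftSet D) (huv : LinearIndependent ℝ ![u, v]) {a b c d : ℝ}
    (hab : a • u + b • v ∉ liftSet D) (hcd : c • u + d • v ∉ liftSet D) :
    0 ≤ a * b * (c * d) := by
  by_contra! hneg
  have hac : a ≠ 0 ∧ c ≠ 0 := by
    constructor <;> rintro rfl <;> simp at hneg
  obtain ⟨φ, hφ⟩ := exists_dual_apply_eq huv ![b, -a]
  obtain ⟨ψ, hψ⟩ := exists_dual_apply_eq huv ![d, -c]
  obtain ⟨hφu, hφv⟩ : φ u = b ∧ φ v = -a := ⟨hφ 0, hφ 1⟩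
  obtain ⟨hψu, hψv⟩ : ψ u = d ∧ ψ v = -c := ⟨hψ 0, hψ 1⟩
  let Q : QuadraticForm ℝ (RV n) := QuadraticMap.linMulLin φ ψ
  have hQ : Continuous Q :=
    φ.continuous_of_finiteDimensional.mul ψ.continuous_of_finiteDimensional
  let L : Set (RP n) := {x | x.rep ∈ Submodule.span ℝ {u, v}}
  have hQ0 : ∀ w ∈ liftSet (D ∩ L), Q w ≠ 0 := fun w hw h => by
    obtain ⟨hwD, hws⟩ := mem_liftSet_inter_iff.1 hw
    rcases mul_eq_zero.1 h with h | h
    · exact hab (smul_add_smul_mem_liftSet_of_mem_span_pair hwD hws hac.1 hφu hφv h)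
    · exact hcd (smul_add_smul_mem_liftSet_of_mem_span_pair hwD hws hac.2 hψu hψv h)
  have huL : u ∈ liftSet (D ∩ L) := mem_liftSet_inter_iff.2 ⟨hu, Submodule.subset_span (by simp)⟩
  have hvL : v ∈ liftSet (D ∩ L) := mem_liftSet_inter_iff.2 ⟨hv, Submodule.subset_span (by simp)⟩
  have hpos : 0 < Q u * Q v := mul_pos_of_isPreconnected_of_ne_zero
    (hD L (isLineR_span_pair huv)) hQ hQ0 huL hvL
  have hQuv : Q u * Q v = a * b * (c * d) := by
    simp only [Q, QuadraticMap.linMulLin_apply, hφu, hφv, hψu, hψv]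
    ring
  exact hneg.not_gt (hQuv ▸ hpos)

theorem exists_pos_smul_add_smul_notMem_liftSet (hu : u ∈ liftSet D) (hv : v ∈ liftSet D)
    (h : ¬ segment ℝ u v ⊆ liftSet D) :
    ∃ a b : ℝ, 0 < a ∧ 0 < b ∧ a • u + b • v ∉ liftSet D := by
  rw [← openSegment_subset_iff_segment_subset hu hv, not_subset] at h
  obtain ⟨_, ⟨a, b, ha, hb, -, rfl⟩, hab⟩ := h
  exact ⟨a, b, ha, hb, hab⟩

theorem segment_subset_liftSet_or_segment_neg (hD : ∀ L, isLineR L → IsPreconnected (D ∩ L))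
    (hu : u ∈ liftSet D) (hv : v ∈ liftSet D) :
    segment ℝ u v ⊆ liftSet D ∨ segment ℝ u (-v) ⊆ liftSet D := by
  by_cases hli : LinearIndependent ℝ ![u, v]
  · by_contra! hcon
    obtain ⟨a, b, ha, hb, hab⟩ := exists_pos_smul_add_smul_notMem_liftSet hu hv hcon.1
    obtain ⟨c, d, hc, hd, hcd⟩ :=
      exists_pos_smul_add_smul_notMem_liftSet hu (neg_mem_liftSet_iff.2 hv) hcon.2
    rw [smul_neg, ← neg_smul] at hcd
    have hnonneg := mul_mul_mul_nonneg_of_notMem_liftSet hD hu hv hli hab hcd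
    have hpos : 0 < a * b * (c * d) := by positivity
    linarith
  · obtain ⟨a, rfl⟩ : ∃ a : ℝ, a • u = v := by
      simpa [LinearIndependent.pair_iff' hu.1] using hli
    have ha : a ≠ 0 := left_ne_zero_of_smul hv.1
    rcases ha.lt_or_gt with ha | ha
    · rw [← neg_smul]
      exact .inr (segment_smul_subset_liftSet hu (neg_pos.2 ha))
    · exact .inl (segment_smul_subset_liftSet hu ha)

end ConvexR

theorem subset_of_isPreconnected_of_mem_or_neg_mem {V : Type*} [InvolutiveNeg V]
    [TopologicalSpace V] [ContinuousNeg V] {A C : Set V} (hC : IsOpen C)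
    (hneg : ∀ v ∈ C, -v ∉ C) (hA : IsPreconnected A) (hAC : ∀ v ∈ A, v ∈ C ∨ -v ∈ C)
    (hne : (A ∩ C).Nonempty) : A ⊆ C :=
  hA.subset_left_of_subset_union hC (hC.preimage continuous_neg)
    (Set.disjoint_left.2 hneg) hAC hne

section HalfCone

variable {V : Type*} [AddCommGroup V] [Module ℝ V] [TopologicalSpace V]

theorem isOpen_setOf_segment_subset [ContinuousAdd V] [ContinuousSMul ℝ V] {L : Set V}
    (hL : IsOpen L) (u : V) : IsOpen {v | segment ℝ u v ⊆ L} := by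
  have hcont : Continuous fun p : V × ℝ => (1 - p.2) • u + p.2 • p.1 := by fun_prop
  have hforall (v : V) : segment ℝ u v ⊆ L ↔ ∀ t ∈ Icc (0 : ℝ) 1, (1 - t) • u + t • v ∈ L := by
    rw [segment_eq_image, image_subset_iff]
    rfl
  simp only [isOpen_iff_eventually, mem_ofPred_eq, hforall]
  exact fun v hv => isCompact_Icc.eventually_forall_of_forall_eventually fun t ht =>
    hcont.continuousAt.eventually_mem (hL.mem_nhds (hv t ht))

/-- The open convex cone `C` is one of the two halves of the cone over `D`: the vectors
representing a point of `D` are those of `C` and of `-C`. -/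
structure IsHalfCone (D : Set (ℙ ℝ V)) (C : ConvexCone ℝ V) : Prop where
  isOpen : IsOpen (C : Set V)
  mem_liftSet_iff : ∀ {v : V}, v ∈ liftSet D ↔ v ∈ C ∨ -v ∈ C

namespace IsHalfCone

variable {D : Set (ℙ ℝ V)} {C : ConvexCone ℝ V}

theorem subset_liftSet (hC : IsHalfCone D C) : (C : Set V) ⊆ liftSet D :=
  fun _ hv => hC.mem_liftSet_iff.2 (.inl hv)

theorem zero_notMem (hC : IsHalfCone D C) : (0 : V) ∉ C :=
  fun h => zero_notMem_liftSet (hC.subset_liftSet h)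

theorem neg_notMem (hC : IsHalfCone D C) {v : V} (hv : v ∈ C) : -v ∉ C :=
  fun h => hC.zero_notMem (add_neg_cancel v ▸ C.add_mem hv h)

theorem mem_of_segment_subset [IsTopologicalAddGroup V] [ContinuousSMul ℝ V]
    (hC : IsHalfCone D C) {v w : V} (hv : v ∈ C) (h : segment ℝ v w ⊆ liftSet D) : w ∈ C :=
  subset_of_isPreconnected_of_mem_or_neg_mem hC.isOpen (fun _ => hC.neg_notMem)
    (convex_segment v w).isPreconnected (fun _ hx => hC.mem_liftSet_iff.1 (h hx))
    ⟨v, left_mem_segment ℝ v w, hv⟩ (right_mem_segment ℝ v w)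

end IsHalfCone

end HalfCone

/-- The half cone consists of the vectors that see a fixed lift of a point of `D`. -/
theorem exists_isHalfCone {n : ℕ} {D : Set (RP n)} (hDo : IsOpen D) (hDc : convexR D) :
    ∃ C : ConvexCone ℝ (RV n), IsHalfCone D C := by
  rcases D.eq_empty_or_nonempty with rfl | ⟨x, hx⟩
  · exact ⟨⊥, isOpen_empty, by simp [liftSet]⟩
  have hu : x.rep ∈ liftSet D := rep_mem_liftSet_iff.2 hx
  let S : Set (RV n) := {v | segment ℝ x.rep v ⊆ liftSet D}
  have hSD : S ⊆ liftSet D := fun v hv => hv (right_mem_segment ℝ _ v)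
  have hmem : ∀ v ∈ liftSet D, v ∈ S ∨ -v ∈ S :=
    fun v hv => segment_subset_liftSet_or_segment_neg hDc.2 hu hv
  have hneg : ∀ v ∈ S, -v ∉ S := fun v => not_segment_neg_subset_liftSet hDc.1
  have hopen : IsOpen S := isOpen_setOf_segment_subset (isOpen_liftSet hDo) _
  have hseg : ∀ {v w}, v ∈ S → segment ℝ v w ⊆ liftSet D → segment ℝ v w ⊆ S :=
    fun {v w} hv h => subset_of_isPreconnected_of_mem_or_neg_mem hopen hneg
      (convex_segment v w).isPreconnected (fun y hy => hmem y (h hy))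
      ⟨v, left_mem_segment ℝ v w, hv⟩
  have hsmul : ∀ ⦃c : ℝ⦄, 0 < c → ∀ ⦃v⦄, v ∈ S → c • v ∈ S := fun c hc v hv =>
    hseg hv (segment_smul_subset_liftSet (hSD hv) hc) (right_mem_segment ℝ _ _)
  refine ⟨⟨S, hsmul, fun v hv w hw => ?_⟩, hopen, fun {v} => ⟨hmem v, fun h =>
    h.elim (fun h => hSD h) fun h => neg_mem_liftSet_iff.1 (hSD h)⟩⟩
  rcases segment_subset_liftSet_or_segment_neg hDc.2 (hSD hv) (hSD hw) with h | h
  · have hmid := hsmul two_pos (hseg hv h (midpoint_mem_segment v w))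
    rwa [midpoint_eq_smul_add, smul_invOf_smul] at hmid
  · exact absurd (hseg hv h (right_mem_segment ℝ v (-w))) (hneg w hw)

theorem smul_add_smul_mem_convexCone {V : Type*} [AddCommGroup V] [Module ℝ V]
    {C : ConvexCone ℝ V} {v w : V} (hv : v ∈ C) (hw : w ∈ C) {a b : ℝ} (ha : 0 ≤ a) (hb : 0 ≤ b)
    (hab : 0 < a + b) : a • v + b • w ∈ C := by
  have hmem := C.convex hv hw (div_nonneg ha hab.le) (div_nonneg hb hab.le) (by field_simp)
  have hsmul := C.smul_mem hab hmem
  rwa [smul_add, smul_smul, smul_smul, mul_div_cancel₀ _ hab.ne',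
    mul_div_cancel₀ _ hab.ne'] at hsmul

section ComplexCone

variable {n : ℕ}

/-- The complex vectors whose real and imaginary parts lie in `C`, that is, `C + iC`. -/
def complexCone (C : Set (RV n)) : Set (CV n) :=
  {z | (fun i => (z i).re) ∈ C ∧ (fun i => (z i).im) ∈ C}

theorem isOpen_complexCone {C : Set (RV n)} (hC : IsOpen C) : IsOpen (complexCone C) :=
  (hC.preimage (by fun_prop : Continuous fun (z : CV n) i => (z i).re)).inter
    (hC.preimage (by fun_prop : Continuous fun (z : CV n) i => (z i).im))

theorem convex_complexCone {C : Set (RV n)} (hC : Convex ℝ C) : Convex ℝ (complexCone C) :=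
  (hC.is_linear_preimage (f := fun (z : CV n) i => (z i).re)
      ⟨fun _ _ => by ext; simp, fun _ _ => by ext; simp⟩).inter
    (hC.is_linear_preimage (f := fun (z : CV n) i => (z i).im)
      ⟨fun _ _ => by ext; simp, fun _ _ => by ext; simp⟩)

theorem smul_cplx_add_smul_cplx_mem_complexCone_iff {C : Set (RV n)} {v w : RV n} {c d : ℂ} :
    c • cplx v + d • cplx w ∈ complexCone C ↔
      c.re • v + d.re • w ∈ C ∧ c.im • v + d.im • w ∈ C := by
  simp only [complexCone, cplx, mem_ofPred_eq, Pi.add_apply, Pi.smul_apply, smul_eq_mul,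
    Complex.add_re, Complex.add_im, Complex.re_mul_ofReal, Complex.im_mul_ofReal]
  rfl

theorem cplx_re_add_I_smul_cplx_im (z : CV n) :
    (1 : ℂ) • cplx (fun i => (z i).re) + Complex.I • cplx (fun i => (z i).im) = z := by
  ext i
  simp [cplx, mul_comm Complex.I, Complex.re_add_im]

/-- Rotate the clockwise one of `c₀` and `c₁` to the positive real axis, or to the diagonal if both
have the same direction. -/
theorem exists_mul_mem_quadrant {c₀ c₁ : ℂ} (hc : 0 ≤ (c₀ * conj c₁).re)
    (hne : c₀ ≠ 0 ∨ c₁ ≠ 0) :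
    ∃ a : ℂ, (0 ≤ (a * c₀).re ∧ 0 ≤ (a * c₁).re ∧ 0 < (a * c₀).re + (a * c₁).re) ∧
      (0 ≤ (a * c₀).im ∧ 0 ≤ (a * c₁).im ∧ 0 < (a * c₀).im + (a * c₁).im) := by
  have him : (c₁ * conj c₀).im = -(c₀ * conj c₁).im := by
    simp only [Complex.mul_im, Complex.conj_re, Complex.conj_im]
    ring
  wlog h : c₁ ≠ 0 ∧ 0 ≤ (c₀ * conj c₁).im generalizing c₀ c₁
  · have hc' : 0 ≤ (c₁ * conj c₀).re := by simpa [mul_comm] using hc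
    have h' : c₀ ≠ 0 ∧ 0 ≤ (c₁ * conj c₀).im := by
      rcases eq_or_ne c₁ 0 with rfl | h₁
      · simpa using hne
      · have hlt : (c₀ * conj c₁).im < 0 := by simpa [h₁] using h
        exact ⟨fun h₀ => by simp [h₀] at hlt, by linarith⟩
    obtain ⟨a, ⟨hre₁, hre₀, hre⟩, him₁, him₀, him⟩ := this hc' hne.symm (by linarith) h'
    exact ⟨a, ⟨hre₀, hre₁, by rwa [add_comm]⟩, him₀, him₁, by rwa [add_comm]⟩
  obtain ⟨h₁, hq⟩ := h
  have hc₁ : conj c₁ * c₁ = (Complex.normSq c₁ : ℝ) := by rw [mul_comm, Complex.mul_conj]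
  have hpos : 0 < Complex.normSq c₁ := Complex.normSq_pos.2 h₁
  rcases hq.lt_or_eq with hq | hq
  · refine ⟨conj c₁, ?_⟩
    rw [mul_comm _ c₀, hc₁, Complex.ofReal_re, Complex.ofReal_im]
    exact ⟨⟨hc, hpos.le, by positivity⟩, hq.le, le_rfl, by positivity⟩
  · refine ⟨(1 + Complex.I) * conj c₁, ?_⟩
    have hdiag : c₀ * conj c₁ = ((c₀ * conj c₁).re : ℝ) := Complex.ext rfl hq.symm
    rw [mul_assoc, mul_assoc, mul_comm _ c₀, hc₁, hdiag]
    simp only [Complex.re_mul_ofReal, Complex.im_mul_ofReal, Complex.add_re, Complex.add_im,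
      Complex.one_re, Complex.one_im, Complex.I_re, Complex.I_im, add_zero, zero_add, one_mul]
    exact ⟨⟨hc, hpos.le, by positivity⟩, hc, hpos.le, by positivity⟩

end ComplexCone

section EllipticTube

variable {n : ℕ} {D : Set (RP n)} {v₀ v₁ : RV n}

theorem realSeg_neg_subset (v₀ v₁ : RV n) : realSeg (-v₀) (-v₁) ⊆ realSeg v₀ v₁ := by
  rintro _ ⟨a, b, hab, h, rfl⟩
  have hneg : -a • v₀ + -b • v₁ = a • -v₀ + b • -v₁ := by module
  exact ⟨-a, -b, by linarith, hneg ▸ h, by simp only [hneg]⟩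

theorem segTube_subset_segTube_neg (v₀ v₁ : RV n) : segTube v₀ v₁ ⊆ segTube (-v₀) (-v₁) := by
  rintro _ ⟨a, b, hab, h, rfl⟩
  have hneg (v : RV n) : cplx (-v) = -cplx v := by
    ext i
    simp [cplx]
  have hcomb : -a • cplx (-v₀) + -b • cplx (-v₁) = a • cplx v₀ + b • cplx v₁ := by
    rw [hneg, hneg, neg_smul_neg, neg_smul_neg]
  exact ⟨-a, -b, by simpa using hab, hcomb ▸ h, by simp only [hcomb]⟩

theorem segTube_smul_right_subset (v : RV n) (r : ℝ) : segTube v (r • v) ⊆ segTube v v := by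
  rintro _ ⟨a, b, -, h, rfl⟩
  have hcomb : (a + b * r) • cplx v + (0 : ℂ) • cplx v = a • cplx v + b • cplx (r • v) := by
    ext i
    simp only [cplx, Pi.add_apply, Pi.smul_apply, smul_eq_mul, Complex.ofReal_mul]
    ring
  exact ⟨a + b * r, 0, by simp, hcomb ▸ h, by simp only [hcomb]⟩

theorem segTube_subset_projImage_complexCone {C : ConvexCone ℝ (RV n)}
    (hv₀ : v₀ ∈ C) (hv₁ : v₁ ∈ C) : segTube v₀ v₁ ⊆ projImage ℂ (complexCone C) := by
  rintro _ ⟨c₀, c₁, hc, h, rfl⟩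
  have hne : c₀ ≠ 0 ∨ c₁ ≠ 0 := by
    by_contra! h0
    simp [h0] at h
  obtain ⟨a, hre, him⟩ := exists_mul_mem_quadrant hc hne
  have hmem : a • (c₀ • cplx v₀ + c₁ • cplx v₁) ∈ complexCone (C : Set (RV n)) := by
    rw [smul_add, smul_smul, smul_smul, smul_cplx_add_smul_cplx_mem_complexCone_iff]
    exact ⟨smul_add_smul_mem_convexCone hv₀ hv₁ hre.1 hre.2.1 hre.2.2,
      smul_add_smul_mem_convexCone hv₀ hv₁ him.1 him.2.1 him.2.2⟩
  have ha : a ≠ 0 := by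
    rintro rfl
    simp at hre
  exact (mk_mem_projImage_iff h).2 ⟨Units.mk0 a ha, hmem⟩

namespace IsHalfCone

variable {C : ConvexCone ℝ (RV n)}

theorem mem_or_exists_eq_smul (hC : IsHalfCone D C) (hv₀ : v₀ ∈ C) (hseg : realSeg v₀ v₁ ⊆ D) :
    v₁ ∈ C ∨ ∃ r : ℝ, v₁ = r • v₀ := by
  by_cases h0 : (0 : RV n) ∈ segment ℝ v₀ v₁
  · obtain ⟨a, b, -, -, hab, h⟩ := h0
    have hb : b ≠ 0 := by
      rintro rfl
      obtain rfl : a = 1 := by linarith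
      have hv₀_eq : v₀ = 0 := by simpa using h
      exact hC.zero_notMem (hv₀_eq ▸ hv₀)
    refine .inr ⟨-(b⁻¹ * a), ?_⟩
    rw [neg_smul, mul_smul, eq_neg_of_add_eq_zero_left h, smul_neg, neg_neg, inv_smul_smul₀ hb]
  · refine .inl (hC.mem_of_segment_subset hv₀ ?_)
    intro x hx
    have hx0 : x ≠ 0 := ne_of_mem_of_not_mem hx h0
    obtain ⟨a, b, ha, hb, -, rfl⟩ := hx
    exact ⟨hx0, hseg ⟨a, b, mul_nonneg ha hb, hx0, rfl⟩⟩

theorem segTube_subset (hC : IsHalfCone D C) (hv₀ : v₀ ∈ C) (hseg : realSeg v₀ v₁ ⊆ D) :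
    segTube v₀ v₁ ⊆ projImage ℂ (complexCone C) := by
  rcases hC.mem_or_exists_eq_smul hv₀ hseg with hv₁ | ⟨r, rfl⟩
  · exact segTube_subset_projImage_complexCone hv₀ hv₁
  · exact (segTube_smul_right_subset v₀ r).trans (segTube_subset_projImage_complexCone hv₀ hv₀)

theorem eTube_subset (hC : IsHalfCone D C) : eTube D ⊆ projImage ℂ (complexCone C) := by
  simp only [eTube, iUnion_subset_iff]
  intro v₀ v₁ hv₀ _ hseg
  have hv₀D : v₀ ∈ liftSet D := ⟨hv₀, hseg ⟨1, 0, by simp, by simpa using hv₀, by simp⟩⟩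
  rcases hC.mem_liftSet_iff.1 hv₀D with hv | hv
  · exact hC.segTube_subset hv hseg
  · exact (segTube_subset_segTube_neg v₀ v₁).trans
      (hC.segTube_subset hv ((realSeg_neg_subset v₀ v₁).trans hseg))

theorem realSeg_subset (hC : IsHalfCone D C) (hv₀ : v₀ ∈ C) (hv₁ : v₁ ∈ C) :
    realSeg v₀ v₁ ⊆ D := by
  rintro _ ⟨a, b, hab, h, rfl⟩
  have hne : a ≠ 0 ∨ b ≠ 0 := by
    by_contra! h0
    simp [h0] at h
  exact (smul_add_smul_mem_liftSet
    ((C.convex.segment_subset hv₀ hv₁).trans hC.subset_liftSet) hab hne).2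

theorem eTube_eq_projImage (hC : IsHalfCone D C) : eTube D = projImage ℂ (complexCone C) := by
  refine hC.eTube_subset.antisymm ?_
  rintro _ ⟨z, ⟨hre, him⟩, rfl⟩
  have hz := cplx_re_add_I_smul_cplx_im (z : CV n)
  simp only [eTube, mem_iUnion]
  exact ⟨_, _, (hC.subset_liftSet hre).1, (hC.subset_liftSet him).1, hC.realSeg_subset hre him,
    1, Complex.I, by simp, by simpa only [hz] using z.2, by simp only [hz]; rfl⟩

end IsHalfCone

end EllipticTube

/-- If `D ⊆ ℝℙⁿ` is an open convex set, then its elliptic tube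
`D^e ⊆ ℂℙⁿ` is ℂ-convex. -/
theorem eTube_cConvex_of_open_convex
    (n : ℕ) (D : Set (RP n)) (hDo : IsOpen D) (hDc : convexR D) :
    cConvex (eTube D) := by
  obtain ⟨C, hC⟩ := exists_isHalfCone hDo hDc
  rw [hC.eTube_eq_projImage]
  exact cConvex_projImage (isOpen_complexCone hC.isOpen) (convex_complexCone C.convex)
    fun h => hC.zero_notMem h.1
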